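/- Let ρ_{ℤ,1/2}(α) := θ₂(α)/θ₃(α) for α > 0, where θ₂(α) = Σ_{k∈ℤ} e^{−π(k+1/2)²α} and θ₃(α) = Σ_{k∈ℤ} e^{−πk²α}. Then: (1) for every α > 0, 0 < ρ_{ℤ,1/2}(α) < 1; (2) the function α ↦ ρ_{ℤ,1/2}(α) is strictly decreasing on (0,+∞). -/

import Mathlib

open scoped BigOperators

/-- The classical Jacobi theta function `θ₂(x) = Σ_{k∈ℤ} e^{−π(k+1/2)²x}`. -/
noncomputable def theta2 (x : ℝ) : ℝ :=
  ∑' n : ℤ, Real.exp (-Real.pi * ((n : ℝ) + 1 / 2) ^ 2 * x)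

/-- The classical Jacobi theta function `θ₃(x) = Σ_{k∈ℤ} e^{−πk²x}`. -/
noncomputable def theta3 (x : ℝ) : ℝ :=
  ∑' n : ℤ, Real.exp (-Real.pi * (n : ℝ) ^ 2 * x)

/-!
For real `x > 0`, `θ₂` and `θ₃` are the values at `a = 1/2` and `a = 0` of the periodic Gaussian
`K a x = ∑ₙ exp (-π (n + a)² x)`, which Mathlib calls `HurwitzZeta.evenKernel`. Splitting `ℤ²` by
the parity of the coordinate sum and using `(s + t)² + (s - t)² = 2 (s² + t²)` gives the duplication
formula `K (c + d) x * K (c - d) x = K c (2x) * K d (2x) + K (c + 1/2) (2x) * K (d + 1/2) (2x)`,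
so `ρ = θ₂/θ₃` satisfies the Landen relation `ρ(x)² = f (ρ(2x))` with `f r = 2r / (1 + r²)`.

Since `f ≤ 1`, also `ρ ≤ 1`; and since `f` is strictly increasing on `[-1, 1]`, the inequality
`ρ(y) < ρ(x)` follows from `ρ(2ᴺy) < ρ(2ᴺx)` for any `N`. For large `N` the latter holds
because `θ₃ → 1` at infinity, while `θ₂` decays at least as fast as `exp (-π x / 4)`.
-/

open Filter HurwitzZeta Real Set Topology

section DuplicationFormula

/-- The parametrization of `ℤ²` by two copies of itself that rotates the lattice by 45 degrees:
`inl (u, v)` runs through the pairs with even coordinate sum, `inr (u, v)` through those with odd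
coordinate sum. -/
def parityRotation : (ℤ × ℤ) ⊕ (ℤ × ℤ) → ℤ × ℤ
  | .inl (u, v) => (u + v, u - v)
  | .inr (u, v) => (u + v + 1, u - v)

lemma parityRotation_bijective : Function.Bijective parityRotation := by
  constructor
  · rintro (⟨a, b⟩ | ⟨a, b⟩) (⟨c, d⟩ | ⟨c, d⟩) h <;>
      simp only [parityRotation, Prod.mk.injEq, Sum.inl.injEq, Sum.inr.injEq, reduceCtorEq]
        at h ⊢ <;>
      lia
  · rintro ⟨m, n⟩
    obtain ⟨k, hk | hk⟩ := Int.even_or_odd' (m + n)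
    · exact ⟨.inl (k, m - k), by simp only [parityRotation, Prod.mk.injEq]; lia⟩
    · exact ⟨.inr (k, k - n), by simp only [parityRotation, Prod.mk.injEq]; lia⟩

lemma hasSum_int_prod_of_parity {M : Type*} [AddCommMonoid M] [TopologicalSpace M]
    [ContinuousAdd M] {f : ℤ × ℤ → M} {s t : M}
    (h_even : HasSum (fun p : ℤ × ℤ ↦ f (p.1 + p.2, p.1 - p.2)) s)
    (h_odd : HasSum (fun p : ℤ × ℤ ↦ f (p.1 + p.2 + 1, p.1 - p.2)) t) :
    HasSum f (s + t) :=
  (Equiv.ofBijective _ parityRotation_bijective).hasSum_iff.1 (h_even.sum h_odd)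

lemma hasSum_evenKernel_mul_evenKernel (a b : ℝ) {x : ℝ} (hx : 0 < x) :
    HasSum (fun p : ℤ × ℤ ↦ exp (-π * ((p.1 + a) ^ 2 + (p.2 + b) ^ 2) * x))
      (evenKernel a x * evenKernel b x) := by
  have ha := hasSum_int_evenKernel a hx
  have hb := hasSum_int_evenKernel b hx
  refine (ha.mul hb (summable_mul_of_summable_norm ha.summable.norm hb.summable.norm)).congr_fun ?_
  intro p
  rw [← exp_add]
  ring_nf

lemma evenKernel_add_mul_evenKernel_sub (c d : UnitAddCircle) {x : ℝ} (hx : 0 < x) :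
    evenKernel (c + d) x * evenKernel (c - d) x =
      evenKernel c (2 * x) * evenKernel d (2 * x) +
        evenKernel (c + (1 / 2 : ℝ)) (2 * x) * evenKernel (d + (1 / 2 : ℝ)) (2 * x) := by
  induction c using QuotientAddGroup.induction_on with | H c => ?_
  induction d using QuotientAddGroup.induction_on with | H d => ?_
  simp only [← AddCircle.coe_add, ← AddCircle.coe_sub]
  have h2x : 0 < 2 * x := by positivity
  refine (hasSum_evenKernel_mul_evenKernel (c + d) (c - d) hx).unique
    (hasSum_int_prod_of_parity ?_ ?_)
  · convert hasSum_evenKernel_mul_evenKernel c d h2x using 3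
    push_cast
    ring
  · convert hasSum_evenKernel_mul_evenKernel (c + 1 / 2) (d + 1 / 2) h2x using 3
    push_cast
    ring

end DuplicationFormula

section Decay

lemma evenKernel_pos (a : UnitAddCircle) {x : ℝ} (hx : 0 < x) : 0 < evenKernel a x := by
  induction a using QuotientAddGroup.induction_on with | H a => ?_
  have h := hasSum_int_evenKernel a hx
  exact h.tsum_eq ▸ h.summable.tsum_pos (fun _ ↦ (exp_pos _).le) 0 (exp_pos _)

lemma evenKernel_le_exp_mul_evenKernel (a : UnitAddCircle) {x y : ℝ} (hx : 0 < x) (hxy : x ≤ y) :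
    evenKernel a y ≤ exp (-π * ‖a‖ ^ 2 * (y - x)) * evenKernel a x := by
  induction a using QuotientAddGroup.induction_on with | H a => ?_
  refine hasSum_le (fun n ↦ ?_) (hasSum_int_evenKernel a (hx.trans_le hxy))
    ((hasSum_int_evenKernel a hx).mul_left _)
  have h_norm : ‖(a : UnitAddCircle)‖ ^ 2 ≤ (n + a) ^ 2 := by
    have h_coe : ((n + a : ℝ) : UnitAddCircle) = a := by simp
    rw [← h_coe, ← sq_abs (n + a)]
    gcongr
    exact QuotientAddGroup.norm_mk_le_norm
  rw [← exp_add, exp_le_exp]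
  linarith [mul_le_mul_of_nonneg_left h_norm (mul_nonneg pi_nonneg (sub_nonneg.2 hxy))]

lemma tendsto_evenKernel_zero_atTop : Tendsto (evenKernel 0) atTop (𝓝 1) := by
  obtain ⟨p, hp, hO⟩ := isBigO_atTop_evenKernel_sub 0
  have h_exp : Tendsto (fun x ↦ exp (-p * x)) atTop (𝓝 0) :=
    tendsto_exp_atBot.comp (tendsto_id.const_mul_atTop_of_neg (neg_neg_of_pos hp))
  simpa using (hO.trans_tendsto h_exp).add_const 1

end Decay

section Theta

variable {x y : ℝ}

lemma theta2_eq_evenKernel (hx : 0 < x) : theta2 x = evenKernel (1 / 2 : ℝ) x :=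
  (hasSum_int_evenKernel (1 / 2) hx).tsum_eq

lemma theta3_eq_evenKernel (hx : 0 < x) : theta3 x = evenKernel 0 x := by
  simpa [theta3] using (hasSum_int_evenKernel 0 hx).tsum_eq

lemma theta2_pos (hx : 0 < x) : 0 < theta2 x :=
  theta2_eq_evenKernel hx ▸ evenKernel_pos _ hx

lemma theta3_pos (hx : 0 < x) : 0 < theta3 x :=
  theta3_eq_evenKernel hx ▸ evenKernel_pos _ hx

lemma one_le_theta3 (hx : 0 < x) : 1 ≤ theta3 x := by
  have h := hasSum_int_evenKernel 0 hx
  rw [theta3_eq_evenKernel hx]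
  simpa using le_hasSum h 0 fun _ _ ↦ (exp_pos _).le

lemma theta2_sq (hx : 0 < x) : theta2 x ^ 2 = 2 * (theta2 (2 * x) * theta3 (2 * x)) := by
  have h2x : 0 < 2 * x := by positivity
  have h_period : ((1 / 2 : ℝ) : UnitAddCircle) + (1 / 2 : ℝ) = 0 := by
    rw [← AddCircle.coe_add, add_halves, AddCircle.coe_period]
  have h := evenKernel_add_mul_evenKernel_sub (1 / 2 : ℝ) 0 hx
  rw [add_zero, sub_zero, h_period, zero_add] at h
  rw [theta2_eq_evenKernel hx, theta2_eq_evenKernel h2x, theta3_eq_evenKernel h2x, sq, h]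
  ring

lemma theta3_sq (hx : 0 < x) : theta3 x ^ 2 = theta3 (2 * x) ^ 2 + theta2 (2 * x) ^ 2 := by
  have h2x : 0 < 2 * x := by positivity
  have h := evenKernel_add_mul_evenKernel_sub 0 0 hx
  rw [add_zero, sub_zero, zero_add] at h
  simp only [theta3_eq_evenKernel hx, theta2_eq_evenKernel h2x, theta3_eq_evenKernel h2x, sq, h]

lemma theta2_le_exp_mul_theta2 (hx : 0 < x) (hxy : x ≤ y) :
    theta2 y ≤ exp (-π / 4 * (y - x)) * theta2 x := by
  have h_norm : ‖((1 / 2 : ℝ) : UnitAddCircle)‖ = 1 / 2 := by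
    rw [AddCircle.norm_half_period_eq, abs_one]
  rw [theta2_eq_evenKernel hx, theta2_eq_evenKernel (hx.trans_le hxy)]
  convert evenKernel_le_exp_mul_evenKernel (1 / 2 : ℝ) hx hxy using 4
  rw [h_norm]
  ring

lemma tendsto_theta3_atTop : Tendsto theta3 atTop (𝓝 1) :=
  tendsto_evenKernel_zero_atTop.congr' <|
    (eventually_gt_atTop 0).mono fun _ hx ↦ (theta3_eq_evenKernel hx).symm

end Theta

section LandenMap

variable {K : Type*} [Field K] [LinearOrder K] [IsStrictOrderedRing K]

lemma two_mul_div_one_add_sq_le_one (r : K) : 2 * r / (1 + r ^ 2) ≤ 1 := by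
  rw [div_le_one (by positivity)]
  simpa using two_mul_le_add_sq 1 r

lemma strictMonoOn_two_mul_div_one_add_sq :
    StrictMonoOn (fun r : K ↦ 2 * r / (1 + r ^ 2)) (Icc (-1) 1) := by
  intro r hr s hs hrs
  have h_mul : r * s < 1 := by
    have h_diff : 0 < (s - r) ^ 2 := pow_pos (sub_pos.2 hrs) 2
    linarith [sq_le_one_iff_abs_le_one r |>.2 (abs_le.2 hr),
      sq_le_one_iff_abs_le_one s |>.2 (abs_le.2 hs)]
  beta_reduce
  rw [div_lt_div_iff₀ (by positivity) (by positivity)]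
  linear_combination 2 * mul_pos (sub_pos.2 hrs) (sub_pos.2 h_mul)

end LandenMap

section Ratio

variable {x y : ℝ}

/-- The ratio `ρ_{ℤ,1/2} = θ₂/θ₃`, meaningful for `x > 0` only: for `x ≤ 0` both series diverge and
the quotient is `0 / 0 = 0`. -/
noncomputable def thetaRatio (x : ℝ) : ℝ := theta2 x / theta3 x

lemma thetaRatio_pos (hx : 0 < x) : 0 < thetaRatio x :=
  div_pos (theta2_pos hx) (theta3_pos hx)

lemma thetaRatio_sq (hx : 0 < x) :
    thetaRatio x ^ 2 = 2 * thetaRatio (2 * x) / (1 + thetaRatio (2 * x) ^ 2) := by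
  have h3 : 0 < theta3 (2 * x) := theta3_pos (by positivity)
  unfold thetaRatio
  rw [div_pow, theta2_sq hx, theta3_sq hx]
  field_simp

lemma thetaRatio_le_one (hx : 0 < x) : thetaRatio x ≤ 1 := by
  rw [← sq_le_one_iff₀ (thetaRatio_pos hx).le, thetaRatio_sq hx]
  exact two_mul_div_one_add_sq_le_one _

lemma thetaRatio_mem_Icc (hx : 0 < x) : thetaRatio x ∈ Icc (-1) 1 :=
  ⟨by linarith [thetaRatio_pos hx], thetaRatio_le_one hx⟩

lemma thetaRatio_lt_of_two_mul (hx : 0 < x) (hy : 0 < y)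
    (h : thetaRatio (2 * y) < thetaRatio (2 * x)) : thetaRatio y < thetaRatio x := by
  refine lt_of_pow_lt_pow_left₀ 2 (thetaRatio_pos hx).le ?_
  rw [thetaRatio_sq hx, thetaRatio_sq hy]
  exact strictMonoOn_two_mul_div_one_add_sq (thetaRatio_mem_Icc (by positivity))
    (thetaRatio_mem_Icc (by positivity)) h

lemma thetaRatio_lt_of_two_pow_mul (hx : 0 < x) (hy : 0 < y) (N : ℕ)
    (h : thetaRatio (2 ^ N * y) < thetaRatio (2 ^ N * x)) : thetaRatio y < thetaRatio x := by
  induction N with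
  | zero => simpa using h
  | succ N ih =>
    refine ih (thetaRatio_lt_of_two_mul (by positivity) (by positivity) ?_)
    rwa [← mul_assoc, ← mul_assoc, ← pow_succ']

lemma eventually_thetaRatio_mul_lt (hx : 0 < x) (hxy : x < y) :
    ∀ᶠ t in atTop, thetaRatio (t * y) < thetaRatio (t * x) := by
  have h_rate : -π / 4 * (y - x) < 0 :=
    mul_neg_of_neg_of_pos (by linarith [pi_pos]) (sub_pos.2 hxy)
  have h_lim : Tendsto (fun t ↦ exp (t * (-π / 4 * (y - x))) * theta3 (t * x)) atTop (𝓝 0) := by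
    simpa using (tendsto_exp_atBot.comp (tendsto_id.atTop_mul_const_of_neg h_rate)).mul
      (tendsto_theta3_atTop.comp (tendsto_id.atTop_mul_const hx))
  filter_upwards [h_lim.eventually_lt_const one_pos, eventually_gt_atTop 0] with t h_small ht
  have htx : 0 < t * x := by positivity
  have hty : 0 < t * y := mul_pos ht (hx.trans hxy)
  have h_exp : theta2 (t * y) ≤ exp (t * (-π / 4 * (y - x))) * theta2 (t * x) := by
    rw [mul_left_comm, mul_sub]
    exact theta2_le_exp_mul_theta2 htx (by gcongr)
  unfold thetaRatio
  rw [div_lt_div_iff₀ (theta3_pos hty) (theta3_pos htx)]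
  calc theta2 (t * y) * theta3 (t * x)
      ≤ exp (t * (-π / 4 * (y - x))) * theta2 (t * x) * theta3 (t * x) :=
        mul_le_mul_of_nonneg_right h_exp (theta3_pos htx).le
    _ = theta2 (t * x) * (exp (t * (-π / 4 * (y - x))) * theta3 (t * x)) := by ring
    _ < theta2 (t * x) * theta3 (t * y) :=
        mul_lt_mul_of_pos_left (h_small.trans_le (one_le_theta3 hty)) (theta2_pos htx)

lemma thetaRatio_strictAntiOn : StrictAntiOn thetaRatio (Ioi 0) := by
  intro x hx y hy hxy
  have h_pow : Tendsto (fun N : ℕ ↦ (2 : ℝ) ^ N) atTop atTop :=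
    tendsto_pow_atTop_atTop_of_one_lt one_lt_two
  obtain ⟨N, hN⟩ := (h_pow.eventually (eventually_thetaRatio_mul_lt hx hxy)).exists
  exact thetaRatio_lt_of_two_pow_mul hx hy N hN

lemma thetaRatio_lt_one (hx : 0 < x) : thetaRatio x < 1 :=
  calc thetaRatio x < thetaRatio (x / 2) :=
        thetaRatio_strictAntiOn (half_pos hx) hx (half_lt_self hx)
    _ ≤ 1 := thetaRatio_le_one (half_pos hx)

end Ratio

/-- `ρ_{ℤ,1/2}(α) = θ₂(α)/θ₃(α)` satisfies `0 < ρ < 1` on `(0,∞)` and is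
strictly decreasing on `(0,∞)`. -/
theorem rho_Z_half_properties :
    (∀ α : ℝ, 0 < α → 0 < theta2 α / theta3 α ∧ theta2 α / theta3 α < 1) ∧
    StrictAntiOn (fun α : ℝ => theta2 α / theta3 α) (Set.Ioi 0) :=
  ⟨fun _ hα ↦ ⟨thetaRatio_pos hα, thetaRatio_lt_one hα⟩, thetaRatio_strictAntiOn⟩
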